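/- arXiv:2201.05902 — 3 statements merged into one kernel-verified Lean document; each statement's English description precedes it below -/
import Mathlib

section
/- Let D, D₁, D₂, D₃ be finite-dimensional complex vector spaces with linear maps u_j : D → D_j and v_j : D_j → D (j = 1, 2, 3) such that each T_j := id_D − v_j ∘ u_j is invertible. For a triple of such data A_j = (D_j, u_j, v_j), define the operations σ₁(A₁, A₂, A₃) := (A₂, (D₁, u₁ ∘ T₂, T₂⁻¹ ∘ v₁), A₃) and σ₂(A₁, A₂, A₃) := (A₁, A₃, (D₂, u₂ ∘ T₃, T₃⁻¹ ∘ v₂)), where in each application the twist used is T = id_D − v ∘ u formed from the current entry in position i+1. Then σ₁σ₂σ₁(A₁, A₂, A₃) = σ₂σ₁σ₂(A₁, A₂, A₃), and both sides equal (A₃, (D₂, u₂ ∘ T₃, T₃⁻¹ ∘ v₂), (D₁, u₁ ∘ T₂ ∘ T₃, T₃⁻¹ ∘ T₂⁻¹ ∘ v₁)). -/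
/-!
Twisting by `A₃` conjugates the twist operator: `T(A₂.twist A₃) = T₃⁻¹ T₂ T₃`, since
`1 - T₃⁻¹ v₂ u₂ T₃ = T₃⁻¹ (1 - v₂ u₂) T₃`. The two braid words have the same first two entries
by definition, with third entries `(A₁.twist A₂).twist A₃` and
`(A₁.twist A₃).twist (A₂.twist A₃)`. These agree because `T₃ (T₃⁻¹ T₂ T₃) = T₂ T₃`,
and dually for the inverses.
-/

/-- A Gelfand–MacPherson–Vilonen quiver datum over the fixed finite-dimensional
complex vector space `D`: a finite-dimensional complex vector space `V` together
with linear maps `u : D → V` and `v : V → D`. -/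
structure QDatum (D : Type) [AddCommGroup D] [Module ℂ D] : Type 1 where
  V : Type
  [instAddCommGroup : AddCommGroup V]
  [instModule : Module ℂ V]
  [instFiniteDimensional : FiniteDimensional ℂ V]
  u : D →ₗ[ℂ] V
  v : V →ₗ[ℂ] D

attribute [instance] QDatum.instAddCommGroup QDatum.instModule
  QDatum.instFiniteDimensional

variable {D : Type} [AddCommGroup D] [Module ℂ D]

/-- The twist `T = id_D − v ∘ u` of a quiver datum. -/
def QDatum.T (A : QDatum D) : Module.End ℂ D := LinearMap.id - A.v ∘ₗ A.u

/-- The datum `A` twisted by the twist of the datum `B`: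
`(V_A, u_A ∘ T_B, T_B⁻¹ ∘ v_A)`. -/
noncomputable def QDatum.twist (A B : QDatum D) : QDatum D where
  V := A.V
  u := A.u ∘ₗ (B.T : D →ₗ[ℂ] D)
  v := (Ring.inverse B.T : D →ₗ[ℂ] D) ∘ₗ A.v

/-- The braid operation `σ₁` on triples of quiver data. -/
noncomputable def sigma1 (t : QDatum D × QDatum D × QDatum D) : QDatum D × QDatum D × QDatum D :=
  (t.2.1, t.1.twist t.2.1, t.2.2)

/-- The braid operation `σ₂` on triples of quiver data. -/
noncomputable def sigma2 (t : QDatum D × QDatum D × QDatum D) : QDatum D × QDatum D × QDatum D :=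
  (t.1, t.2.2, t.2.1.twist t.2.2)

/-- Twisting by `B` conjugates the twist operator of `A` by that of `B`. -/
theorem QDatum.T_twist (A B : QDatum D) (hB : IsUnit B.T) :
    (A.twist B).T = Ring.inverse B.T * A.T * B.T := by
  have h : (A.twist B).T = 1 - Ring.inverse B.T * (A.v ∘ₗ A.u) * B.T := rfl
  have h' : A.T = 1 - A.v ∘ₗ A.u := rfl
  rw [h, h', mul_sub, sub_mul, mul_one, Ring.inverse_mul_cancel _ hB]

/-- The inverse of the conjugated twist operator. Only `B.T` has to be invertible: if `A.T` is
not a unit, both sides are the junk value `0`. -/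
theorem QDatum.inverse_T_twist (A B : QDatum D) (hB : IsUnit B.T) :
    Ring.inverse (A.twist B).T = Ring.inverse B.T * Ring.inverse A.T * B.T := by
  rw [A.T_twist B hB]
  obtain ⟨b, hb⟩ := hB
  rw [← hb, Ring.inverse_unit]
  by_cases hA : IsUnit A.T
  · obtain ⟨a, ha⟩ := hA
    rw [← ha, Ring.inverse_unit, ← Units.val_mul, ← Units.val_mul, Ring.inverse_unit,
      ← Units.val_mul, ← Units.val_mul]
    simp [mul_inv_rev, mul_assoc]
  · rw [Ring.inverse_non_unit _ hA, Ring.inverse_non_unit, mul_zero, zero_mul]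
    rwa [Units.isUnit_mul_units, Units.isUnit_units_mul]

/-- Self-distributivity of twisting, which is the braid relation in the third entry. -/
theorem QDatum.twist_twist (A B C : QDatum D) (hC : IsUnit C.T) :
    (A.twist B).twist C = (A.twist C).twist (B.twist C) := by
  have hu : B.T * C.T = C.T * (B.twist C).T := by
    rw [B.T_twist C hC, mul_assoc, Ring.mul_inverse_cancel_left _ _ hC]
  have hv : Ring.inverse C.T * Ring.inverse B.T
      = Ring.inverse (B.twist C).T * Ring.inverse C.T := by
    rw [B.inverse_T_twist C hC, Ring.mul_inverse_cancel_right _ _ hC]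
  have hu' : (A.u ∘ₗ B.T) ∘ₗ C.T = (A.u ∘ₗ C.T) ∘ₗ (B.twist C).T :=
    congrArg (fun f : Module.End ℂ D => A.u ∘ₗ f) hu
  have hv' : Ring.inverse C.T ∘ₗ (Ring.inverse B.T ∘ₗ A.v)
      = Ring.inverse (B.twist C).T ∘ₗ (Ring.inverse C.T ∘ₗ A.v) :=
    congrArg (fun f : Module.End ℂ D => f ∘ₗ A.v) hv
  exact congrArg₂ (fun (u : D →ₗ[ℂ] A.V) (v : A.V →ₗ[ℂ] D) =>
    ({ V := A.V, u := u, v := v } : QDatum D)) hu' hv'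

/-- For quiver data `A₁, A₂, A₃` over `D` whose twists `T_j = id − v_j ∘ u_j` are all
invertible, we have `σ₁σ₂σ₁(A₁, A₂, A₃) = σ₂σ₁σ₂(A₁, A₂, A₃)`, and both sides are
equal to `(A₃, (D₂, u₂ ∘ T₃, T₃⁻¹ ∘ v₂), (D₁, u₁ ∘ T₂ ∘ T₃, T₃⁻¹ ∘ T₂⁻¹ ∘ v₁))`. -/
theorem stmt1 [FiniteDimensional ℂ D] (A₁ A₂ A₃ : QDatum D)
    (h₁ : IsUnit A₁.T) (h₂ : IsUnit A₂.T) (h₃ : IsUnit A₃.T) :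
    sigma1 (sigma2 (sigma1 (A₁, A₂, A₃))) = sigma2 (sigma1 (sigma2 (A₁, A₂, A₃))) ∧
      sigma1 (sigma2 (sigma1 (A₁, A₂, A₃)))
        = (A₃,
            { V := A₂.V
              u := A₂.u ∘ₗ (A₃.T : D →ₗ[ℂ] D)
              v := (Ring.inverse A₃.T : D →ₗ[ℂ] D) ∘ₗ A₂.v },
            { V := A₁.V
              u := A₁.u ∘ₗ (A₂.T : D →ₗ[ℂ] D) ∘ₗ (A₃.T : D →ₗ[ℂ] D)
              v := (Ring.inverse A₃.T : D →ₗ[ℂ] D) ∘ₗ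
                     (Ring.inverse A₂.T : D →ₗ[ℂ] D) ∘ₗ A₁.v }) := by
  refine ⟨?_, rfl⟩
  exact congrArg (fun X => (A₃, A₂.twist A₃, X)) (A₁.twist_twist A₂ A₃ h₃)
end

section
/- Fix n ≥ 2 and a finite-dimensional complex vector space D. Consider the set of n-tuples ((D_i, u_i, v_i))_{i=1}^n of finite-dimensional ℂ-vector spaces D_i with linear maps u_i : D → D_i, v_i : D_i → D such that each T_i := id_D − v_i ∘ u_i is invertible. For 1 ≤ i ≤ n−1 let f_{s_i} be the map sending such a tuple to the tuple with entries j ∉ {i, i+1} unchanged, entry i equal to (D_{i+1}, u_{i+1}, v_{i+1}), and entry i+1 equal to (D_i, u_i ∘ T_{i+1}, T_{i+1}⁻¹ ∘ v_i). Then each f_{s_i} is a well-defined bijection of this set, and these bijections satisfy the braid relations: f_{s_i} ∘ f_{s_{i+1}} ∘ f_{s_i} = f_{s_{i+1}} ∘ f_{s_i} ∘ f_{s_{i+1}} for 1 ≤ i ≤ n−2, and f_{s_i} ∘ f_{s_j} = f_{s_j} ∘ f_{s_i} whenever |i − j| ≥ 2. -/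
variable {D : Type} [AddCommGroup D] [Module ℂ D]

/-- An `n`-tuple of quiver data is *good* if all its twists `T_i = id − v_i ∘ u_i`
are invertible, i.e. it is an object of the category `P_n` (with total space `D`
fixed). -/
def Good {n : ℕ} (A : Fin n → QDatum D) : Prop :=
  ∀ i, IsUnit (A i).T

/-- The braid move `f_{s_i}` (zero-based: it acts on the entries in positions `i`
and `i+1`): the entry in position `i` becomes the old entry in position `i+1`,
and the entry in position `i+1` becomes the old entry in position `i` twisted by
`T_{i+1}`, i.e. `(D_i, u_i ∘ T_{i+1}, T_{i+1}⁻¹ ∘ v_i)`.  All other entries are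
unchanged. -/
noncomputable def braidMove {n : ℕ} (i : ℕ) (A : Fin n → QDatum D) :
    Fin n → QDatum D :=
  if h : i + 1 < n then
    Function.update
      (Function.update A ⟨i, Nat.lt_of_succ_lt h⟩ (A ⟨i + 1, h⟩))
      ⟨i + 1, h⟩ ((A ⟨i, Nat.lt_of_succ_lt h⟩).twist (A ⟨i + 1, h⟩))
  else A

namespace QDatum

/-- The datum `(V, u ∘ t, t⁻¹ ∘ v)` obtained from `A = (V, u, v)` by transport along an
endomorphism `t` of `D`; it is meaningful only for invertible `t`, since `Ring.inverse` is `0`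
on non-units. -/
noncomputable def conj (A : QDatum D) (t : Module.End ℂ D) : QDatum D where
  V := A.V
  u := A.u ∘ₗ (t : D →ₗ[ℂ] D)
  v := (Ring.inverse t : D →ₗ[ℂ] D) ∘ₗ A.v

theorem twist_eq_conj (A B : QDatum D) : A.twist B = A.conj B.T := rfl

theorem conj_one (A : QDatum D) : A.conj 1 = A := by
  cases A
  simp only [conj, Ring.inverse_one]
  rfl

theorem conj_conj (A : QDatum D) {s t : Module.End ℂ D} (hs : IsUnit s) (ht : IsUnit t) :
    (A.conj s).conj t = A.conj (s * t) := by
  obtain ⟨s, rfl⟩ := hs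
  obtain ⟨t, rfl⟩ := ht
  simp only [conj, ← Units.val_mul, Ring.inverse_unit, mul_inv_rev]
  rfl

theorem T_conj (A : QDatum D) {t : Module.End ℂ D} (ht : IsUnit t) :
    (A.conj t).T = Ring.inverse t * A.T * t := by
  have h : (A.conj t).T = 1 - Ring.inverse t * (A.v ∘ₗ A.u : Module.End ℂ D) * t := rfl
  have h' : A.T = 1 - (A.v ∘ₗ A.u : Module.End ℂ D) := rfl
  rw [h, h', mul_sub, sub_mul, mul_one, Ring.inverse_mul_cancel _ ht]

/-- Equivariance of the twist in the form needed for the braid relation: with `t = T_c` it reads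
`T_c T_{b ^ c} = T_b T_c`. -/
theorem mul_T_conj (A : QDatum D) {t : Module.End ℂ D} (ht : IsUnit t) :
    t * (A.conj t).T = A.T * t := by
  rw [T_conj A ht, mul_assoc, Ring.mul_inverse_cancel_left _ _ ht]

theorem isUnit_T_conj {A : QDatum D} (hA : IsUnit A.T) {t : Module.End ℂ D} (ht : IsUnit t) :
    IsUnit (A.conj t).T := by
  rw [T_conj A ht]
  exact (ht.ringInverse.mul hA).mul ht

end QDatum

theorem braidMove_apply {n : ℕ} (i : ℕ) (h : i + 1 < n) (A : Fin n → QDatum D) (k : Fin n) :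
    braidMove i A k =
      if (k : ℕ) = i + 1 then (A ⟨i, Nat.lt_of_succ_lt h⟩).conj (A ⟨i + 1, h⟩).T
      else if (k : ℕ) = i then A ⟨i + 1, h⟩ else A k := by
  simp only [braidMove, h, dif_pos, Function.update_apply, Fin.ext_iff, QDatum.twist_eq_conj]

theorem good_braidMove {n : ℕ} (i : ℕ) (h : i + 1 < n) {A : Fin n → QDatum D} (hA : Good A) :
    Good (braidMove i A) := by
  intro k
  rw [braidMove_apply i h]
  split_ifs
  · exact QDatum.isUnit_T_conj (hA _) (hA _)
  · exact hA _
  · exact hA _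

/-- The inverse `(a, b) ↦ (b ^ (T_a⁻¹), a)` of `braidMove i`, acting on positions `i, i + 1`. -/
noncomputable def braidInv {n : ℕ} (i : ℕ) (h : i + 1 < n) (A : Fin n → QDatum D) :
    Fin n → QDatum D := fun k =>
  if (k : ℕ) = i + 1 then A ⟨i, Nat.lt_of_succ_lt h⟩
  else if (k : ℕ) = i then
    (A ⟨i + 1, h⟩).conj (Ring.inverse (A ⟨i, Nat.lt_of_succ_lt h⟩).T)
  else A k

theorem good_braidInv {n : ℕ} (i : ℕ) (h : i + 1 < n) {A : Fin n → QDatum D} (hA : Good A) :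
    Good (braidInv i h A) := by
  intro k
  unfold braidInv
  split_ifs
  · exact hA _
  · exact QDatum.isUnit_T_conj (hA _) (hA _).ringInverse
  · exact hA _

theorem braidInv_braidMove {n : ℕ} (i : ℕ) (h : i + 1 < n) {A : Fin n → QDatum D}
    (hA : Good A) : braidInv i h (braidMove i A) = A := by
  funext k
  have hk (hki : (k : ℕ) = i) : A ⟨i, Nat.lt_of_succ_lt h⟩ = A k := by congr 1; ext; exact hki.symm
  have hk' (hki : (k : ℕ) = i + 1) : A ⟨i + 1, h⟩ = A k := by congr 1; ext; exact hki.symm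
  simp only [braidInv, braidMove_apply i h]
  by_cases h1 : (k : ℕ) = i + 1
  · simpa [h1] using hk' h1
  by_cases h2 : (k : ℕ) = i
  · simp [h2, QDatum.conj_conj, hA _, (hA _).ringInverse, Ring.mul_inverse_cancel,
      QDatum.conj_one, hk h2]
  · simp [h1, h2]

theorem braidMove_braidInv {n : ℕ} (i : ℕ) (h : i + 1 < n) {A : Fin n → QDatum D}
    (hA : Good A) : braidMove i (braidInv i h A) = A := by
  funext k
  have hk (hki : (k : ℕ) = i) : A ⟨i, Nat.lt_of_succ_lt h⟩ = A k := by congr 1; ext; exact hki.symm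
  have hk' (hki : (k : ℕ) = i + 1) : A ⟨i + 1, h⟩ = A k := by congr 1; ext; exact hki.symm
  simp only [braidInv, braidMove_apply i h]
  by_cases h1 : (k : ℕ) = i + 1
  · simp [h1, QDatum.conj_conj, hA _, (hA _).ringInverse, Ring.inverse_mul_cancel,
      QDatum.conj_one, hk' h1]
  by_cases h2 : (k : ℕ) = i
  · simpa [h2] using hk h2
  · simp [h1, h2]

theorem braidMove_braid {n : ℕ} (i : ℕ) (h : i + 2 < n) {A : Fin n → QDatum D} (hA : Good A) :
    braidMove i (braidMove (i + 1) (braidMove i A))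
      = braidMove (i + 1) (braidMove i (braidMove (i + 1) A)) := by
  have h1 : i + 1 < n := by omega
  have h2 : i + 1 + 1 < n := h
  have a1 : i + 1 + 1 ≠ i := by omega
  funext k
  simp only [braidMove_apply i h1, braidMove_apply (i + 1) h2]
  by_cases e0 : (k : ℕ) = i
  · simp [e0, a1, a1.symm]
  by_cases e1 : (k : ℕ) = i + 1
  · simp [e1, a1, a1.symm]
  by_cases e2 : (k : ℕ) = i + 1 + 1
  · simp [e2, a1, a1.symm, QDatum.conj_conj, hA _, QDatum.isUnit_T_conj, QDatum.mul_T_conj]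
  · simp [e0, e1, e2]

theorem braidMove_comm {n : ℕ} (i j : ℕ) (hi : i + 1 < n) (hj : j + 1 < n) (hij : i + 2 ≤ j)
    (A : Fin n → QDatum D) :
    braidMove i (braidMove j A) = braidMove j (braidMove i A) := by
  have a1 : i ≠ j := by omega
  have a2 : i ≠ j + 1 := by omega
  have a3 : i + 1 ≠ j := by omega
  funext k
  simp only [braidMove_apply i hi, braidMove_apply j hj]
  by_cases e0 : (k : ℕ) = i
  · simp [e0, a1, a2, a3]
  by_cases e1 : (k : ℕ) = i + 1
  · simp [e1, a1, a2, a3]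
  simp [e0, e1, a1.symm, a2.symm, a3.symm]

/-- For `n ≥ 2`, each braid move `f_{s_i}` is a well-defined bijection of the set of
good `n`-tuples of quiver data over `D`, and these bijections satisfy the braid
relations `f_{s_i} f_{s_{i+1}} f_{s_i} = f_{s_{i+1}} f_{s_i} f_{s_{i+1}}` and
`f_{s_i} f_{s_j} = f_{s_j} f_{s_i}` for `|i − j| ≥ 2`. -/
theorem stmt2 [FiniteDimensional ℂ D] (n : ℕ) (hn : 2 ≤ n) :
    (∀ i : ℕ, i + 1 < n →
        Set.BijOn (braidMove (D := D) (n := n) i)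
          {A : Fin n → QDatum D | Good A} {A : Fin n → QDatum D | Good A}) ∧
      (∀ i : ℕ, i + 2 < n → ∀ A : Fin n → QDatum D, Good A →
        braidMove i (braidMove (i + 1) (braidMove i A))
          = braidMove (i + 1) (braidMove i (braidMove (i + 1) A))) ∧
      (∀ i j : ℕ, i + 1 < n → j + 1 < n → (i + 2 ≤ j ∨ j + 2 ≤ i) →
        ∀ A : Fin n → QDatum D, Good A →
          braidMove i (braidMove j A) = braidMove j (braidMove i A)) := by
  refine ⟨fun i h => ?_, fun i h A hA => braidMove_braid i h hA, ?_⟩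
  · exact Set.InvOn.bijOn (f' := braidInv i h)
      ⟨fun A hA => braidInv_braidMove i h hA, fun A hA => braidMove_braidInv i h hA⟩
      (fun A hA => good_braidMove i h hA) (fun A hA => good_braidInv i h hA)
  · rintro i j hi hj (hij | hij) A -
    · exact braidMove_comm i j hi hj hij A
    · exact (braidMove_comm j i hj hi hij A).symm
end

section
/- Let n ≥ 1 and let V be the ℚ-vector space of functions Fin (n+1) → ℚ, with standard basis e₀, …, e_n. Define the ℚ-linear map E : V → V by (E x)_k = Σ_{j=0}^{k} x_j / (k − j)!. Let χ : V → ℚ be any linear functional with χ(e_n) ≠ 0, and define the ℚ-linear map M : V → V by M x := E x − χ(E x) • e₀. Then M x = x implies x = 0; consequently id_V − M is a linear automorphism of V. -/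
/-!
If `M x = x`, the coordinate `0` of this equation reads `x₀ - χ (E x) = x₀`, since `E` is
unipotent lower triangular; hence `χ (E x) = 0` and `E x = x`. The coordinate `m + 1` of `E x = x`
says that `∑_{j ≤ m} x_j / (m + 1 - j)! = 0`, so by induction `x_m = 0` for every `m < n`: the
fixed space of `E` is the line spanned by `e_n` (`coord_eq_zero_of_fixed`). Then
`0 = χ (E x) = χ x = x_n χ (e_n)` forces `x_n = 0`. Thus `id - M` is injective, and an injective
endomorphism of a finite-dimensional space is an automorphism.
-/

open Finset in
/-- A fixed vector of multiplication by the truncated exponential has vanishing coordinates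
outside the top degree. -/
theorem coord_eq_zero_of_fixed (n : ℕ) (x : Fin (n + 1) → ℚ)
    (h : ∀ k : Fin (n + 1),
      ∑ j ∈ Iic k, x j / (Nat.factorial ((k : ℕ) - (j : ℕ)) : ℚ) = x k)
    (m : ℕ) (hm : m < n) : x ⟨m, by omega⟩ = 0 := by
  induction m using Nat.strong_induction_on with
  | _ m ih =>
    have hk := h ⟨m + 1, by omega⟩
    -- By induction only the terms `j = m` and `j = m + 1` survive.
    rw [Finset.sum_eq_add (⟨m, by omega⟩ : Fin (n + 1)) ⟨m + 1, by omega⟩ (by simp)] at hk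
    · simpa using hk
    · rintro ⟨j, hj⟩ hjk ⟨h1, h2⟩
      simp only [mem_Iic, Fin.mk_le_mk, ne_eq, Fin.mk.injEq] at hjk h1 h2
      rw [ih j (by omega) (by omega), zero_div]
    · intro h'
      simp at h'
    · intro h'
      simp at h'


open Finset in
/-- Let `n ≥ 1` and let `V = Fin (n+1) → ℚ` with standard basis `e₀, …, e_n`.
Let `E : V →ₗ V` be the linear map with `(E x)_k = ∑_{j=0}^{k} x_j / (k − j)!`,
let `χ : V →ₗ ℚ` be a linear functional with `χ(e_n) ≠ 0`, and let
`M x := E x − χ(E x) • e₀`.  Then `M x = x` implies `x = 0`; consequently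
`id_V − M` is a linear automorphism of `V`. -/
theorem stmt3 (n : ℕ) (hn : 1 ≤ n)
    (E : (Fin (n + 1) → ℚ) →ₗ[ℚ] (Fin (n + 1) → ℚ))
    (hE : ∀ (x : Fin (n + 1) → ℚ) (k : Fin (n + 1)),
      E x k = ∑ j ∈ Iic k, x j / (Nat.factorial ((k : ℕ) - (j : ℕ)) : ℚ))
    (χ : (Fin (n + 1) → ℚ) →ₗ[ℚ] ℚ)
    (hχ : χ ((Pi.single (Fin.last n) 1 : Fin (n + 1) → ℚ)) ≠ 0) :
    (∀ x : Fin (n + 1) → ℚ,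
        E x - χ (E x) • (Pi.single 0 1 : Fin (n + 1) → ℚ) = x → x = 0) ∧
      ∃ T : (Fin (n + 1) → ℚ) ≃ₗ[ℚ] (Fin (n + 1) → ℚ),
        ∀ x : Fin (n + 1) → ℚ,
          T x = x - (E x - χ (E x) • (Pi.single 0 1 : Fin (n + 1) → ℚ)) := by
  have hinj : ∀ x : Fin (n + 1) → ℚ,
      E x - χ (E x) • (Pi.single 0 1 : Fin (n + 1) → ℚ) = x → x = 0 := by
    intro x hx
    have hE0 : E x 0 = x 0 := by
      have hI : Iic (0 : Fin (n + 1)) = {0} := by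
        ext j
        simp
      rw [hE, hI]
      simp
    have hc : χ (E x) = 0 := by
      have h0 := congrFun hx 0
      simpa [hE0] using h0
    have hfix : E x = x := by simpa [hc] using hx
    have hlow := coord_eq_zero_of_fixed n x (fun k => by rw [← hE, hfix])
    have htop : x = x (Fin.last n) • (Pi.single (Fin.last n) 1 : Fin (n + 1) → ℚ) := by
      ext k
      rcases eq_or_ne k (Fin.last n) with rfl | hk
      · simp
      · have hz : x k = 0 := hlow k (Fin.val_lt_last hk)
        simp [hz, hk]
    have hlast : x (Fin.last n) = 0 := by
      rw [hfix, htop, map_smul, smul_eq_mul] at hc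
      exact (mul_eq_zero.mp hc).resolve_right hχ
    rw [htop, hlast, zero_smul]
  refine ⟨hinj, ?_⟩
  let f : (Fin (n + 1) → ℚ) →ₗ[ℚ] (Fin (n + 1) → ℚ) :=
    LinearMap.id - (E - (χ ∘ₗ E).smulRight (Pi.single 0 1))
  have hf : ∀ x, f x = x - (E x - χ (E x) • (Pi.single 0 1 : Fin (n + 1) → ℚ)) :=
    fun x => rfl
  have hfinj : Function.Injective f := by
    rw [injective_iff_map_eq_zero]
    intro x hx
    rw [hf, sub_eq_zero] at hx
    exact hinj x hx.symm
  exact ⟨LinearEquiv.ofInjectiveEndo f hfinj, hf⟩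
end
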